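/- Let q be a prime power, σ ∈ S_n, 1 ≤ i ≤ n−1, and let hB ∈ [σ]. Then in ℂ[G/B]: (i) if σ_{i+1} < σ_i, then (hB)·T_i = ∑_{j=1}^q g_jB for q pairwise distinct cosets g_jB ∈ [σs_i], and summing over the double coset, (∑_{hB∈[σ]} hB)·T_i = ∑_{gB∈[σs_i]} gB; (ii) if σ_{i+1} > σ_i, then (hB)·T_i = gB + ∑_{j=1}^{q−1} h_jB for some gB ∈ [σs_i] and q−1 pairwise distinct cosets h_jB ∈ [σ], and summing over the double coset, (∑_{hB∈[σ]} hB)·T_i = q·(∑_{gB∈[σs_i]} gB) + (q−1)·(∑_{hB∈[σ]} hB). -/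

import Mathlib

open scoped Classical
set_option linter.unusedSectionVars false
set_option synthInstance.maxHeartbeats 1000000
set_option maxHeartbeats 1000000

noncomputable section

namespace QTsetlin

/-- `M` is upper triangular. -/
def upperTri {F : Type} [Field F] {n : ℕ} (M : Matrix (Fin n) (Fin n) F) : Prop :=
  ∀ i j : Fin n, j < i → M i j = 0

/-- `M` is lower triangular. -/
def lowerTri {F : Type} [Field F] {n : ℕ} (M : Matrix (Fin n) (Fin n) F) : Prop :=
  ∀ i j : Fin n, i < j → M i j = 0

variable (F : Type) [Field F] [Fintype F] [DecidableEq F] (n : ℕ)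

/-- The general linear group `G = GL_n(F_q)`. -/
abbrev GLn := GL (Fin n) F

/-- The Borel subgroup `B` of invertible upper triangular matrices. -/
def Bsub : Subgroup (GLn F n) where
  carrier := {g | upperTri (g : Matrix (Fin n) (Fin n) F)}
  one_mem' := by
    intro i j hij
    simp [Matrix.one_apply, (Fin.ne_of_lt hij).symm]
  mul_mem' := by
    intro a b ha hb i j hij
    exact Matrix.BlockTriangular.mul ha hb hij
  inv_mem' := by
    intro a ha
    have hdet : IsUnit ((a : Matrix (Fin n) (Fin n) F).det) :=
      (Matrix.isUnit_iff_isUnit_det _).mp a.isUnit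
    have hinv : Invertible (a : Matrix (Fin n) (Fin n) F) :=
      Matrix.invertibleOfIsUnitDet _ hdet
    have h2 : ((a : Matrix (Fin n) (Fin n) F)⁻¹).BlockTriangular (id : Fin n → Fin n) :=
      Matrix.blockTriangular_inv_of_blockTriangular ha
    show upperTri ((a⁻¹ : GLn F n) : Matrix (Fin n) (Fin n) F)
    rw [show ((a⁻¹ : GLn F n) : Matrix (Fin n) (Fin n) F)
        = (a : Matrix (Fin n) (Fin n) F)⁻¹ from Matrix.coe_units_inv a]
    exact h2

/-- The set of cosets `G/B`. -/
abbrev Cosets := GLn F n ⧸ Bsub F n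

/-- permutation matrix of `π`: entry 1 in positions `(π j, j)`. -/
def permMat (π : Equiv.Perm (Fin n)) : Matrix (Fin n) (Fin n) F :=
  fun i j => if π j = i then 1 else 0

lemma permMat_mul (π σ : Equiv.Perm (Fin n)) :
    permMat F n π * permMat F n σ = permMat F n (π * σ) := by
  ext i j
  rw [Matrix.mul_apply]
  simp only [permMat, mul_ite, ite_mul, one_mul, mul_one, mul_zero, zero_mul]
  rw [Finset.sum_eq_single (σ j)]
  · by_cases h : π (σ j) = i <;> simp [Equiv.Perm.mul_apply, h]
  · intro k _ hk
    simp [hk.symm]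
  · simp

lemma permMat_one : permMat F n 1 = 1 := by
  ext i j
  simp [permMat, Matrix.one_apply, eq_comm]

/-- The permutation matrix of `π`, as an element of `GL_n(F)`. -/
def permGL (π : Equiv.Perm (Fin n)) : GLn F n :=
  ⟨permMat F n π, permMat F n π⁻¹,
    by rw [permMat_mul, mul_inv_cancel, permMat_one],
    by rw [permMat_mul, inv_mul_cancel, permMat_one]⟩

/-- `f_i(t)`: identity matrix with an extra entry `t` in position `(r, c)`, as an
element of `GL_n(F)`. -/
def transvGL (r c : Fin n) (h : r ≠ c) (t : F) : GLn F n :=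
  ⟨Matrix.transvection r c t, Matrix.transvection r c (-t),
    by rw [Matrix.transvection_mul_transvection_same _ _ h, add_neg_cancel,
      Matrix.transvection_zero],
    by rw [Matrix.transvection_mul_transvection_same _ _ h, neg_add_cancel,
      Matrix.transvection_zero]⟩

variable (K : Type) [Field K]

/-- Matrix (row convention: row `gB` is `(gB) · T_{k+1}`) of the Hecke generator `T_{k+1}`
(paper indexing) on `ℂ[G/B]`:
`(gB)·T_i = g s_i B + ∑_{t ≠ 0} g f_i(t) B`, where `s_i` swaps (0-based) positions `k, k+1`
and `f_i(t)` has an extra entry `t` in (0-based) position `(k+1, k)`. -/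
def genGB (k : ℕ) : Matrix (Cosets F n) (Cosets F n) K := fun C D =>
  if h : k + 1 < n then
    (if (QuotientGroup.mk (C.out * permGL F n
          (Equiv.swap ⟨k, Nat.lt_of_succ_lt h⟩ ⟨k + 1, h⟩)) : Cosets F n) = D then 1 else 0)
    + ((Finset.univ.filter fun t : F => t ≠ 0 ∧
        (QuotientGroup.mk (C.out * transvGL F n ⟨k + 1, h⟩ ⟨k, Nat.lt_of_succ_lt h⟩
          (fun hc => by simp [Fin.ext_iff] at hc) t) : Cosets F n) = D).card : K)
  else 0

/-- Matrix of the product `T_k T_{k-1} ⋯ T_1` (paper indexing) on `ℂ[G/B]`. -/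
def prodGenGB : ℕ → Matrix (Cosets F n) (Cosets F n) K
  | 0 => 1
  | k + 1 => genGB F n K k * prodGenGB k

/-- The (0-based) row index of the leading entry (the pivot `1` of the distinguished coset
representative) in the first column of a representative of the coset `C`. -/
def pivotRow (C : Cosets F n) : ℕ :=
  sInf {i : ℕ | ∃ h : i < n,
    ((C.out : GLn F n) : Matrix (Fin n) (Fin n) F) ⟨i, h⟩
      ⟨0, Nat.lt_of_le_of_lt (Nat.zero_le i) h⟩ ≠ 0}

/-- Matrix of the weighting operator `X_{G/B}(q,x)`, where `q` is the cardinality of the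
field: `gB ↦ (x_i / q^{n-i}) gB` with `i` the row index of the leading 1 in the first
column of the distinguished representative of `gB`. -/
def XGB (x : Fin n → K) : Matrix (Cosets F n) (Cosets F n) K := fun C D =>
  if D = C then
    (if h : pivotRow F n C < n then
      x ⟨pivotRow F n C, h⟩ / (Fintype.card F : K) ^ (n - 1 - pivotRow F n C)
    else 0)
  else 0

/-- Matrix of the q-Tsetlin library operator
`T_{G/B}(q,x) = (∑_{i=1}^n T_{i-1} ⋯ T_1) ∘ X_{G/B}(q,x)` on `ℂ[G/B]` (row convention). -/
def TGB (x : Fin n → K) : Matrix (Cosets F n) (Cosets F n) K :=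
  (∑ k ∈ Finset.range n, prodGenGB F n K k) * XGB F n K x

/-- The coset `gB` belongs to the double coset `[π] = B⁻ π B`. -/
def inDC (π : Equiv.Perm (Fin n)) (C : Cosets F n) : Prop :=
  ∃ l b : GLn F n, lowerTri (l : Matrix (Fin n) (Fin n) F) ∧
    upperTri (b : Matrix (Fin n) (Fin n) F) ∧
    C = QuotientGroup.mk (l * permGL F n π * b)

/-- Levels of the flag stabilised by the minimal parabolic subgroup. -/
def lev (k : ℕ) (i : Fin n) : ℕ := if (i : ℕ) ≤ k then i else i - 1

/-- The minimal parabolic subgroup. -/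
def Psub (k : ℕ) : Subgroup (GLn F n) where
  carrier := {g | (g : Matrix (Fin n) (Fin n) F).BlockTriangular (lev n k)}
  one_mem' := by
    simpa using Matrix.blockTriangular_one
  mul_mem' := by
    intro a b ha hb
    exact Matrix.BlockTriangular.mul ha hb
  inv_mem' := by
    intro a ha
    have hdet : IsUnit ((a : Matrix (Fin n) (Fin n) F).det) :=
      (Matrix.isUnit_iff_isUnit_det _).mp a.isUnit
    have hinv : Invertible (a : Matrix (Fin n) (Fin n) F) :=
      Matrix.invertibleOfIsUnitDet _ hdet
    have h2 : ((a : Matrix (Fin n) (Fin n) F)⁻¹).BlockTriangular (lev n k) :=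
      Matrix.blockTriangular_inv_of_blockTriangular ha
    show ((a⁻¹ : GLn F n) : Matrix (Fin n) (Fin n) F).BlockTriangular (lev n k)
    rw [show ((a⁻¹ : GLn F n) : Matrix (Fin n) (Fin n) F)
        = (a : Matrix (Fin n) (Fin n) F)⁻¹ from Matrix.coe_units_inv a]
    exact h2

lemma mem_B_iff (g : GLn F n) :
    g ∈ Bsub F n ↔ ∀ i j : Fin n, j < i → (g : Matrix (Fin n) (Fin n) F) i j = 0 := Iff.rfl

lemma mem_P_iff (k : ℕ) (g : GLn F n) :
    g ∈ Psub F n k ↔ ∀ i j : Fin n, lev n k j < lev n k i →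
      (g : Matrix (Fin n) (Fin n) F) i j = 0 :=
  ⟨fun h i j hij => h hij, fun h i j hij => h i j hij⟩

lemma B_le_P (k : ℕ) : Bsub F n ≤ Psub F n k := by
  intro g hg
  rw [mem_P_iff]
  intro i j hij
  refine hg i j ?_
  by_contra hc
  rw [not_lt, Fin.le_def] at hc
  unfold lev at hij
  split_ifs at hij <;> omega

variable (k : ℕ) (hk : k + 1 < n)

/-- Simple reflection, as an element of `GL_n`. -/
def sG : GLn F n := permGL F n (Equiv.swap ⟨k, Nat.lt_of_succ_lt hk⟩ ⟨k + 1, hk⟩)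

/-- The lower unipotent element `f(t)`. -/
def fG (t : F) : GLn F n := transvGL F n ⟨k + 1, hk⟩ ⟨k, Nat.lt_of_succ_lt hk⟩
          (fun hc => by simp [Fin.ext_iff] at hc) t

lemma mem_B_of_P (g : GLn F n) (hg : g ∈ Psub F n k)
    (h : (g : Matrix (Fin n) (Fin n) F) ⟨k + 1, hk⟩ ⟨k, Nat.lt_of_succ_lt hk⟩ = 0) :
    g ∈ Bsub F n := by
  rw [mem_B_iff]
  rw [mem_P_iff] at hg
  intro i j hij
  by_cases hc : (i : ℕ) = k + 1 ∧ (j : ℕ) = k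
  · obtain rfl : i = ⟨k + 1, hk⟩ := Fin.ext hc.1
    obtain rfl : j = ⟨k, Nat.lt_of_succ_lt hk⟩ := Fin.ext hc.2
    exact h
  · apply hg
    rw [Fin.lt_def] at hij
    unfold lev
    split_ifs <;> omega

lemma permMat_mul_apply (π : Equiv.Perm (Fin n)) (M : Matrix (Fin n) (Fin n) F) (i j : Fin n) :
    (permMat F n π * M) i j = M (π⁻¹ i) j := by
  rw [Matrix.mul_apply, Finset.sum_eq_single (π⁻¹ i)]
  · simp [permMat]
  · intro b _ hb
    have : π b ≠ i := fun h => hb (by simp [← h])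
    simp [permMat, this]
  · simp

lemma mul_permMat_apply (π : Equiv.Perm (Fin n)) (M : Matrix (Fin n) (Fin n) F) (i j : Fin n) :
    (M * permMat F n π) i j = M i (π j) := by
  rw [Matrix.mul_apply, Finset.sum_eq_single (π j)]
  · simp [permMat]
  · intro b _ hb
    simp [permMat, hb.symm]
  · simp

lemma coe_sG_mul (M : Matrix (Fin n) (Fin n) F) (i j : Fin n) :
    ((sG F n k hk : Matrix (Fin n) (Fin n) F) * M) i j =
      M (Equiv.swap ⟨k, Nat.lt_of_succ_lt hk⟩ ⟨k + 1, hk⟩ i) j := by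
  have := permMat_mul_apply F n (Equiv.swap ⟨k, Nat.lt_of_succ_lt hk⟩ ⟨k + 1, hk⟩) M i j
  rw [Equiv.swap_inv] at this
  exact this

lemma coe_fG (t : F) : (fG F n k hk t : Matrix (Fin n) (Fin n) F) =
    Matrix.transvection ⟨k + 1, hk⟩ ⟨k, Nat.lt_of_succ_lt hk⟩ t := rfl

lemma lev_swap (i : Fin n) :
    lev n k (Equiv.swap ⟨k, Nat.lt_of_succ_lt hk⟩ ⟨k + 1, hk⟩ i) = lev n k i := by
  rw [Equiv.swap_apply_def]
  split_ifs with h1 h2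
  · subst h1; simp [lev]
  · subst h2; simp [lev]
  · rfl

lemma sG_mem_P : sG F n k hk ∈ Psub F n k := by
  rw [mem_P_iff]
  intro i j hij
  have h := coe_sG_mul F n k hk 1 i j
  rw [mul_one] at h
  rw [h, Matrix.one_apply_ne]
  rintro rfl
  rw [lev_swap] at hij
  exact lt_irrefl _ hij

lemma fG_mem_P (t : F) : fG F n k hk t ∈ Psub F n k := by
  rw [mem_P_iff]
  intro i j hij
  rw [coe_fG, Matrix.transvection, Matrix.add_apply, Matrix.one_apply_ne, zero_add,
    Matrix.single_apply_of_ne]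
  · rintro ⟨rfl, rfl⟩
    simp [lev] at hij
  · rintro rfl
    exact lt_irrefl _ hij

lemma fG_inv (t : F) : (fG F n k hk t)⁻¹ = fG F n k hk (-t) := Units.ext rfl

lemma fG_mul (t u : F) : fG F n k hk t * fG F n k hk u = fG F n k hk (t + u) :=
  Units.ext (Matrix.transvection_mul_transvection_same _ _
    (by simp [Fin.ext_iff]) t u)

lemma fG_zero : fG F n k hk 0 = 1 := Units.ext (Matrix.transvection_zero _ _)

lemma sG_sq : sG F n k hk * sG F n k hk = 1 := by
  apply Units.ext
  show permMat F n _ * permMat F n _ = 1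
  rw [permMat_mul, Equiv.swap_mul_self, permMat_one]

lemma fG_entry (t : F) : (fG F n k hk t : Matrix (Fin n) (Fin n) F)
    ⟨k + 1, hk⟩ ⟨k, Nat.lt_of_succ_lt hk⟩ = t := by
  rw [coe_fG]
  simp [Matrix.transvection, Matrix.one_apply]

lemma fG_mul_entry (t : F) (M : Matrix (Fin n) (Fin n) F) (j : Fin n) :
    ((fG F n k hk t : Matrix (Fin n) (Fin n) F) * M) ⟨k + 1, hk⟩ j =
      M ⟨k + 1, hk⟩ j + t * M ⟨k, Nat.lt_of_succ_lt hk⟩ j := by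
  rw [coe_fG]
  simp [Matrix.transvection, add_mul]

/-- The representatives of `P/B`. -/
def rep : Option F → GLn F n
  | none => sG F n k hk
  | some t => fG F n k hk t

lemma rep_mem (o : Option F) : rep F n k hk o ∈ Psub F n k := by
  cases o
  · exact sG_mem_P F n k hk
  · exact fG_mem_P F n k hk _

lemma fs_notMem (t : F) : (fG F n k hk t)⁻¹ * sG F n k hk ∉ Bsub F n := by
  intro h
  have h1 := (mem_B_iff F n _).1 h ⟨k + 1, hk⟩ ⟨k, Nat.lt_of_succ_lt hk⟩ (by simp [Fin.lt_def])
  rw [fG_inv, Units.val_mul, fG_mul_entry] at h1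
  simp [sG, permGL, permMat] at h1

lemma rep_inj (g : GLn F n) : Function.Injective
    (fun o : Option F => (QuotientGroup.mk (g * rep F n k hk o) : Cosets F n)) := by
  have key : ∀ a b : GLn F n, (QuotientGroup.mk (g * a) : Cosets F n) = QuotientGroup.mk (g * b) →
      a⁻¹ * b ∈ Bsub F n := by
    intro a b h
    rw [QuotientGroup.eq] at h
    simpa [mul_assoc] using h
  intro o p h
  have h1 := key _ _ h
  have h2 := key _ _ h.symm
  cases o with
  | none =>
    cases p with
    | none => rfl
    | some u => exact absurd h2 (fs_notMem F n k hk u)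
  | some t =>
    cases p with
    | none => exact absurd h1 (fs_notMem F n k hk t)
    | some u =>
      simp only [rep] at h1
      rw [fG_inv, fG_mul] at h1
      have h3 := (mem_B_iff F n _).1 h1 ⟨k + 1, hk⟩ ⟨k, Nat.lt_of_succ_lt hk⟩
        (by simp [Fin.lt_def])
      rw [fG_entry] at h3
      congr 1
      linear_combination -h3

lemma exists_rep (p : GLn F n) (hp : p ∈ Psub F n k) :
    ∃ o, (rep F n k hk o)⁻¹ * p ∈ Bsub F n := by
  by_cases ha : (p : Matrix (Fin n) (Fin n) F) ⟨k, Nat.lt_of_succ_lt hk⟩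
      ⟨k, Nat.lt_of_succ_lt hk⟩ = 0
  · refine ⟨none, mem_B_of_P F n k hk _ (mul_mem (inv_mem (rep_mem F n k hk _)) hp) ?_⟩
    have : (rep F n k hk none)⁻¹ = sG F n k hk := inv_eq_of_mul_eq_one_left (sG_sq F n k hk)
    rw [this, Units.val_mul, coe_sG_mul]
    simpa using ha
  · refine ⟨some ((p : Matrix (Fin n) (Fin n) F) ⟨k + 1, hk⟩ ⟨k, Nat.lt_of_succ_lt hk⟩ /
      (p : Matrix (Fin n) (Fin n) F) ⟨k, Nat.lt_of_succ_lt hk⟩ ⟨k, Nat.lt_of_succ_lt hk⟩),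
      mem_B_of_P F n k hk _ (mul_mem (inv_mem (rep_mem F n k hk _)) hp) ?_⟩
    simp only [rep]
    rw [fG_inv, Units.val_mul, fG_mul_entry]
    field_simp
    ring

/-- The projection `G/B → G/P`. -/
def proj (C : Cosets F n) : GLn F n ⧸ Psub F n k := QuotientGroup.mk C.out

lemma proj_mk (g : GLn F n) : proj F n k (QuotientGroup.mk g) = QuotientGroup.mk g := by
  unfold proj
  rw [QuotientGroup.eq]
  apply B_le_P F n k
  rw [← QuotientGroup.eq]
  exact QuotientGroup.out_eq' _

lemma proj_eq_iff (g : GLn F n) (D : Cosets F n) :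
    proj F n k D = proj F n k (QuotientGroup.mk g) ↔
      ∃ o, QuotientGroup.mk (g * rep F n k hk o) = D := by
  constructor
  · intro h
    induction D using QuotientGroup.induction_on with
    | H d =>
      rw [proj_mk, proj_mk, eq_comm, QuotientGroup.eq] at h
      obtain ⟨o, ho⟩ := exists_rep F n k hk _ h
      refine ⟨o, ?_⟩
      rw [QuotientGroup.eq]
      simpa [mul_assoc] using ho
  · rintro ⟨o, rfl⟩
    rw [proj_mk, proj_mk, eq_comm, QuotientGroup.eq]
    simpa using rep_mem F n k hk o

lemma genGB_eq (hk : k + 1 < n) (C D : Cosets F n) :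
    genGB F n K k C D = if proj F n k D = proj F n k C ∧ D ≠ C then 1 else 0 := by
  have hC : (QuotientGroup.mk C.out : Cosets F n) = C := QuotientGroup.out_eq' C
  have hiff := proj_eq_iff F n k hk C.out D
  rw [hC] at hiff
  have hinj := rep_inj F n k hk C.out
  have h0 : (QuotientGroup.mk (C.out * rep F n k hk (some 0)) : Cosets F n) = C := by
    simp only [rep]
    rw [fG_zero, mul_one, hC]
  have hg : genGB F n K k C D =
      (if (QuotientGroup.mk (C.out * rep F n k hk none) : Cosets F n) = D then 1 else 0) +
      ((Finset.univ.filter fun t : F => t ≠ 0 ∧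
        (QuotientGroup.mk (C.out * rep F n k hk (some t)) : Cosets F n) = D).card : K) := by
    unfold genGB
    rw [dif_pos hk]
    rfl
  rw [hg]
  generalize rep F n k hk = r at *
  by_cases h : proj F n k D = proj F n k C
  · obtain ⟨o, rfl⟩ := hiff.1 h
    have hi : ∀ a b, (QuotientGroup.mk (C.out * r a) : Cosets F n) = QuotientGroup.mk (C.out * r b)
      ↔ a = b := fun a b => hinj.eq_iff
    have hi2 : (QuotientGroup.mk (C.out * r o) : Cosets F n) = C ↔ o = some 0 := by
      exact ⟨fun e => (hi _ _).1 (e.trans h0.symm), fun e => e ▸ h0⟩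
    simp only [hi, h, true_and, ne_eq, hi2]
    cases o with
    | none => simp
    | some t =>
      by_cases ht : t = 0
      · subst ht; simp
      · have : (Finset.univ.filter fun u : F => ¬ u = 0 ∧ some u = some t) = {t} := by
          ext u; simp; rintro rfl; exact ht
        rw [this]; simp [ht]
  · have h' : ∀ o, (QuotientGroup.mk (C.out * r o) : Cosets F n) ≠ D := by
      intro o ho; exact h (hiff.2 ⟨o, ho⟩)
    simp [h, h']

lemma lower_diag (l : GLn F n) (hl : lowerTri (l : Matrix (Fin n) (Fin n) F)) (i : Fin n) :
    (l : Matrix (Fin n) (Fin n) F) i i ≠ 0 := by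
  have h1 : (l : Matrix (Fin n) (Fin n) F).det = ∏ i, (l : Matrix (Fin n) (Fin n) F) i i :=
    Matrix.det_of_lowerTriangular _ (fun i j hij => hl i j hij)
  have hdet : IsUnit ((l : Matrix (Fin n) (Fin n) F).det) :=
      (Matrix.isUnit_iff_isUnit_det _).mp l.isUnit
  rw [h1] at hdet
  exact Finset.prod_ne_zero_iff.1 hdet.ne_zero i (Finset.mem_univ i)

lemma lower_mul (l m : GLn F n) (hl : lowerTri (l : Matrix (Fin n) (Fin n) F))
    (hm : lowerTri (m : Matrix (Fin n) (Fin n) F)) :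
    lowerTri ((l * m : GLn F n) : Matrix (Fin n) (Fin n) F) := by
  intro i j hij
  rw [Units.val_mul, Matrix.mul_apply]
  apply Finset.sum_eq_zero
  intro x _
  by_cases h : i < x
  · rw [hl i x h, zero_mul]
  · rw [hm x j (lt_of_le_of_lt (not_lt.1 h) hij), mul_zero]

lemma lower_inv (a : GLn F n) (ha : lowerTri (a : Matrix (Fin n) (Fin n) F)) :
    lowerTri ((a⁻¹ : GLn F n) : Matrix (Fin n) (Fin n) F) := by
  have hdet : IsUnit ((a : Matrix (Fin n) (Fin n) F).det) :=
    (Matrix.isUnit_iff_isUnit_det _).mp a.isUnit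
  have hinv : Invertible (a : Matrix (Fin n) (Fin n) F) :=
    Matrix.invertibleOfIsUnitDet _ hdet
  have h2 : ((a : Matrix (Fin n) (Fin n) F)⁻¹).BlockTriangular OrderDual.toDual :=
    Matrix.blockTriangular_inv_of_blockTriangular (fun i j hij => ha i j hij)
  rw [show ((a⁻¹ : GLn F n) : Matrix (Fin n) (Fin n) F)
      = (a : Matrix (Fin n) (Fin n) F)⁻¹ from Matrix.coe_units_inv a]
  exact fun i j hij => h2 hij

lemma inDC_iff (π : Equiv.Perm (Fin n)) (C : Cosets F n) :
    inDC F n π C ↔ ∃ l : GLn F n, lowerTri (l : Matrix (Fin n) (Fin n) F) ∧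
      C = QuotientGroup.mk (l * permGL F n π) := by
  constructor
  · rintro ⟨l, b, hl, hb, rfl⟩
    refine ⟨l, hl, ?_⟩
    rw [eq_comm, QuotientGroup.eq, inv_mul_cancel_left]
    exact hb
  · rintro ⟨l, hl, rfl⟩
    refine ⟨l, 1, hl, (Bsub F n).one_mem, ?_⟩
    rw [mul_one]

lemma permGL_mul (π τ : Equiv.Perm (Fin n)) :
    permGL F n π * permGL F n τ = permGL F n (π * τ) := Units.ext (permMat_mul F n π τ)

lemma disjointDC (τ : Equiv.Perm (Fin n)) (C : Cosets F n) (h : inDC F n τ C)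
    (h' : inDC F n (τ * Equiv.swap ⟨k, Nat.lt_of_succ_lt hk⟩ ⟨k + 1, hk⟩) C) : False := by
  obtain ⟨l, hl, rfl⟩ := (inDC_iff F n _ _).1 h
  obtain ⟨m, hm, he⟩ := (inDC_iff F n _ _).1 h'
  rw [eq_comm, QuotientGroup.eq] at he
  have h1 := (mem_B_iff F n _).1 he ⟨k + 1, hk⟩ ⟨k, Nat.lt_of_succ_lt hk⟩ (by simp [Fin.lt_def])
  have hp : ∀ π, (permGL F n π)⁻¹ = permGL F n π⁻¹ := fun π => Units.ext rfl
  rw [mul_inv_rev, hp, show permGL F n (τ * Equiv.swap ⟨k, Nat.lt_of_succ_lt hk⟩ ⟨k + 1, hk⟩)⁻¹ *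
    m⁻¹ * (l * permGL F n τ) = permGL F n (τ * Equiv.swap ⟨k, Nat.lt_of_succ_lt hk⟩
      ⟨k + 1, hk⟩)⁻¹ * ((m⁻¹ * l) * permGL F n τ) by group, Units.val_mul, Units.val_mul] at h1
  have h2 := permMat_mul_apply F n (τ * Equiv.swap ⟨k, Nat.lt_of_succ_lt hk⟩ ⟨k + 1, hk⟩)⁻¹
    (((m⁻¹ * l : GLn F n) : Matrix (Fin n) (Fin n) F) * permMat F n τ)
    ⟨k + 1, hk⟩ ⟨k, Nat.lt_of_succ_lt hk⟩
  rw [mul_permMat_apply] at h2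
  have h3 := h2.symm.trans h1
  simp only [inv_inv, Equiv.Perm.mul_apply, Equiv.swap_apply_right] at h3
  exact lower_diag F n _ (lower_mul F n _ _ (lower_inv F n m hm) hl) _ h3

lemma conj_transv (τ : Equiv.Perm (Fin n)) (r c : Fin n) (h : r ≠ c) (h' : τ r ≠ τ c) (t : F) :
    permGL F n τ * transvGL F n r c h t = transvGL F n (τ r) (τ c) h' t * permGL F n τ := by
  apply Units.ext
  show permMat F n τ * Matrix.transvection r c t =
    Matrix.transvection (τ r) (τ c) t * permMat F n τ
  ext i j
  rw [permMat_mul_apply, mul_permMat_apply]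
  obtain ⟨i, rfl⟩ := τ.surjective i
  simp [Matrix.transvection, Matrix.one_apply, Matrix.single_apply]

lemma inDC_some (τ : Equiv.Perm (Fin n))
    (hτ : τ ⟨k, Nat.lt_of_succ_lt hk⟩ < τ ⟨k + 1, hk⟩) (l : GLn F n)
    (hl : lowerTri (l : Matrix (Fin n) (Fin n) F)) (t : F) :
    inDC F n τ (QuotientGroup.mk (l * permGL F n τ * rep F n k hk (some t))) := by
  rw [inDC_iff]
  refine ⟨l * transvGL F n _ _ hτ.ne' t, lower_mul F n _ _ hl ?_, ?_⟩
  · intro i j hij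
    show Matrix.transvection _ _ t i j = 0
    rw [Matrix.transvection, Matrix.add_apply, Matrix.one_apply_ne hij.ne, zero_add,
      Matrix.single_apply_of_ne]
    rintro ⟨rfl, rfl⟩
    exact lt_asymm hij hτ
  · rw [mul_assoc, mul_assoc]
    simp only [rep, fG]
    rw [conj_transv]

lemma inDC_none (τ : Equiv.Perm (Fin n)) (l : GLn F n)
    (hl : lowerTri (l : Matrix (Fin n) (Fin n) F)) :
    inDC F n (τ * Equiv.swap ⟨k, Nat.lt_of_succ_lt hk⟩ ⟨k + 1, hk⟩)
      (QuotientGroup.mk (l * permGL F n τ * rep F n k hk none)) := by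
  rw [inDC_iff]
  refine ⟨l, hl, ?_⟩
  rw [← permGL_mul, mul_assoc]
  rfl

/-- Description of the fibres of `G/B → G/P` meeting `[τ]` or `[τ s]`. -/
lemma fibre (τ : Equiv.Perm (Fin n))
    (hτ : τ ⟨k, Nat.lt_of_succ_lt hk⟩ < τ ⟨k + 1, hk⟩) (C : Cosets F n)
    (hC : inDC F n τ C ∨ inDC F n (τ * Equiv.swap ⟨k, Nat.lt_of_succ_lt hk⟩ ⟨k + 1, hk⟩) C) :
    (Finset.univ.filter fun D : Cosets F n =>
      proj F n k D = proj F n k C ∧ inDC F n τ D).card = Fintype.card F ∧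
    (∃ D₀, ∀ D, (proj F n k D = proj F n k C ∧
      inDC F n (τ * Equiv.swap ⟨k, Nat.lt_of_succ_lt hk⟩ ⟨k + 1, hk⟩) D) ↔ D = D₀) ∧
    (∀ D, proj F n k D = proj F n k C → inDC F n τ D ∨
      inDC F n (τ * Equiv.swap ⟨k, Nat.lt_of_succ_lt hk⟩ ⟨k + 1, hk⟩) D) := by
  obtain ⟨l, hl, hp⟩ : ∃ l : GLn F n, lowerTri (l : Matrix (Fin n) (Fin n) F) ∧
      proj F n k C = proj F n k (QuotientGroup.mk (l * permGL F n τ)) := by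
    rcases hC with hC | hC
    · obtain ⟨l, hl, rfl⟩ := (inDC_iff F n _ _).1 hC
      exact ⟨l, hl, rfl⟩
    · obtain ⟨l, hl, rfl⟩ := (inDC_iff F n _ _).1 hC
      refine ⟨l, hl, (proj_eq_iff F n k hk _ _).2 ⟨none, ?_⟩⟩
      rw [← permGL_mul, mul_assoc]
      rfl
  rw [hp]
  have hiff := proj_eq_iff F n k hk (l * permGL F n τ)
  have hs := inDC_some F n k hk τ hτ l hl
  have hn := inDC_none F n k hk τ l hl
  have hd := disjointDC F n k hk τ
  have hinj := rep_inj F n k hk (l * permGL F n τ)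
  refine ⟨?_, ⟨QuotientGroup.mk (l * permGL F n τ * rep F n k hk none), ?_⟩, ?_⟩
  · rw [← Finset.card_univ (α := F), eq_comm]
    rw [← Finset.card_image_of_injective Finset.univ
      (hinj.comp (Option.some_injective F))]
    congr 1
    ext D
    simp only [Finset.mem_image, Finset.mem_univ, true_and, Finset.mem_filter, Function.comp]
    constructor
    · rintro ⟨t, rfl⟩
      exact ⟨(hiff _).2 ⟨_, rfl⟩, hs t⟩
    · rintro ⟨h1, h2⟩
      obtain ⟨o, rfl⟩ := (hiff _).1 h1
      cases o with
      | none => exact (hd _ h2 hn).elim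
      | some t => exact ⟨t, rfl⟩
  · intro D
    constructor
    · rintro ⟨h1, h2⟩
      obtain ⟨o, rfl⟩ := (hiff _).1 h1
      cases o with
      | none => rfl
      | some t => exact (hd _ (hs t) h2).elim
    · rintro rfl
      exact ⟨(hiff _).2 ⟨_, rfl⟩, hn⟩
  · intro D h1
    obtain ⟨o, rfl⟩ := (hiff _).1 h1
    cases o with
    | none => exact Or.inr hn
    | some t => exact Or.inl (hs t)

/-- Action of a Hecke generator on a double coset in `ℂ[G/B]`.  Here `q`
is a prime power (the cardinality of the finite field `F`), the paper's generator index
`i ∈ {1,…,n-1}` corresponds to the 0-based index `k = i - 1` (so `T_i` is `genGB F n ℂ k`,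
swapping 0-based positions `k` and `k+1`), `σ s_i` is `σ * Equiv.swap ⟨k,_⟩ ⟨k+1,_⟩`, and
`(hB)·T_i` is the row of the matrix `genGB F n ℂ k` at the coset `hB`. -/
theorem hecke_generator_on_double_cosets (F : Type) [Field F] [Fintype F] [DecidableEq F]
    (n k : ℕ) (hk : k + 1 < n) (σ : Equiv.Perm (Fin n)) :
    -- (i): the case `σ_{i+1} < σ_i`
    (σ ⟨k + 1, hk⟩ < σ ⟨k, Nat.lt_of_succ_lt hk⟩ →
      (∀ C : Cosets F n, inDC F n σ C →
        ∃ S : Finset (Cosets F n), S.card = Fintype.card F ∧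
          (∀ D ∈ S, inDC F n (σ * Equiv.swap ⟨k, Nat.lt_of_succ_lt hk⟩ ⟨k + 1, hk⟩) D) ∧
          (∀ D : Cosets F n, genGB F n ℂ k C D = if D ∈ S then 1 else 0)) ∧
      (∀ D : Cosets F n,
        ∑ C ∈ Finset.univ.filter (fun C : Cosets F n => inDC F n σ C), genGB F n ℂ k C D =
          if inDC F n (σ * Equiv.swap ⟨k, Nat.lt_of_succ_lt hk⟩ ⟨k + 1, hk⟩) D
          then 1 else 0)) ∧
    -- (ii): the case `σ_{i+1} > σ_i`
    (σ ⟨k, Nat.lt_of_succ_lt hk⟩ < σ ⟨k + 1, hk⟩ →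
      (∀ C : Cosets F n, inDC F n σ C →
        ∃ D₀ : Cosets F n,
          inDC F n (σ * Equiv.swap ⟨k, Nat.lt_of_succ_lt hk⟩ ⟨k + 1, hk⟩) D₀ ∧
          ∃ S : Finset (Cosets F n), S.card = Fintype.card F - 1 ∧
            (∀ D ∈ S, inDC F n σ D) ∧
            (∀ D : Cosets F n, genGB F n ℂ k C D =
              (if D = D₀ then 1 else 0) + (if D ∈ S then 1 else 0))) ∧
      (∀ D : Cosets F n,
        ∑ C ∈ Finset.univ.filter (fun C : Cosets F n => inDC F n σ C), genGB F n ℂ k C D =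
          (Fintype.card F : ℂ) *
            (if inDC F n (σ * Equiv.swap ⟨k, Nat.lt_of_succ_lt hk⟩ ⟨k + 1, hk⟩) D
             then 1 else 0)
          + ((Fintype.card F : ℂ) - 1) * (if inDC F n σ D then 1 else 0))) := by
  have hgen := fun C D => genGB_eq F n ℂ k hk C D
  constructor
  · intro hσ
    set s := Equiv.swap (⟨k, Nat.lt_of_succ_lt hk⟩ : Fin n) ⟨k + 1, hk⟩ with hs
    obtain ⟨τ, rfl⟩ : ∃ τ, σ = τ * s := ⟨σ * s, by rw [mul_assoc, hs, Equiv.swap_mul_self, mul_one]⟩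
    have hss : τ * s * s = τ := by rw [mul_assoc, hs, Equiv.swap_mul_self, mul_one]
    have hτ : τ ⟨k, Nat.lt_of_succ_lt hk⟩ < τ ⟨k + 1, hk⟩ := by
      simpa [hs] using hσ
    rw [hss]
    have hf := fibre F n k hk τ hτ
    have hd := disjointDC F n k hk τ
    rw [← hs] at hf hd
    constructor
    · intro C hC
      obtain ⟨h1, ⟨D₀, h2⟩, h3⟩ := hf C (Or.inr hC)
      refine ⟨_, h1, fun D hD => (Finset.mem_filter.1 hD).2.2, fun D => ?_⟩
      rw [hgen]
      congr 1
      simp only [Finset.mem_filter, Finset.mem_univ, true_and, eq_iff_iff]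
      constructor
      · rintro ⟨ha, hb⟩
        refine ⟨ha, (h3 D ha).resolve_right fun hc => hb ?_⟩
        rw [(h2 D).1 ⟨ha, hc⟩, (h2 C).1 ⟨rfl, hC⟩]
      · rintro ⟨ha, hb⟩
        refine ⟨ha, ?_⟩
        rintro rfl
        exact hd _ hb hC
    · intro D
      simp only [hgen]
      rw [Finset.sum_boole, Finset.filter_filter]
      by_cases hD : inDC F n τ D
      · obtain ⟨h1, ⟨D₀, h2⟩, h3⟩ := hf D (Or.inl hD)
        rw [if_pos hD]
        have : (Finset.univ.filter fun C : Cosets F n => inDC F n (τ * s) C ∧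
            proj F n k D = proj F n k C ∧ D ≠ C) = {D₀} := by
          ext C
          simp only [Finset.mem_filter, Finset.mem_univ, true_and, Finset.mem_singleton]
          rw [← h2 C]
          constructor
          · rintro ⟨ha, hb, hc⟩
            exact ⟨hb.symm, ha⟩
          · rintro ⟨ha, hb⟩
            refine ⟨hb, ha.symm, ?_⟩
            rintro rfl
            exact hd _ hD hb
        rw [this]
        simp
      · rw [if_neg hD]
        rw [Finset.filter_eq_empty_iff.2]
        · simp
        · rintro C - ⟨ha, hb, hc⟩
          obtain ⟨h1, ⟨D₀, h2⟩, h3⟩ := hf C (Or.inr ha)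
          rcases h3 D hb with h | h
          · exact hD h
          · exact hc (((h2 D).1 ⟨hb, h⟩).trans ((h2 C).1 ⟨rfl, ha⟩).symm)
  · intro hτ
    have hf := fibre F n k hk σ hτ
    have hd := disjointDC F n k hk σ
    set s := Equiv.swap (⟨k, Nat.lt_of_succ_lt hk⟩ : Fin n) ⟨k + 1, hk⟩ with hs
    have hq : 1 ≤ Fintype.card F := Fintype.card_pos
    constructor
    · intro C hC
      obtain ⟨h1, ⟨D₀, h2⟩, h3⟩ := hf C (Or.inl hC)
      have hD₀ := (h2 D₀).2 rfl
      refine ⟨D₀, hD₀.2, (Finset.univ.filter fun D : Cosets F n =>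
        proj F n k D = proj F n k C ∧ inDC F n σ D).erase C, ?_, ?_, ?_⟩
      · rw [Finset.card_erase_of_mem (by simp [hC]), h1]
      · intro D hD
        exact (Finset.mem_filter.1 (Finset.mem_of_mem_erase hD)).2.2
      · intro D
        rw [hgen]
        simp only [Finset.mem_erase, Finset.mem_filter, Finset.mem_univ, true_and]
        by_cases hD : D = D₀
        · subst hD
          have hne : D ≠ C := by
            rintro rfl
            exact hd _ hC hD₀.2
          have hn : ¬ inDC F n σ D := fun h => hd _ h hD₀.2
          simp [hD₀.1, hne, hn]
        · rw [if_neg hD, zero_add]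
          congr 1
          simp only [eq_iff_iff]
          constructor
          · rintro ⟨ha, hb⟩
            exact ⟨hb, ha, (h3 D ha).resolve_right fun hc => hD ((h2 D).1 ⟨ha, hc⟩)⟩
          · rintro ⟨ha, hb, hc⟩
            exact ⟨hb, ha⟩
    · intro D
      simp only [hgen]
      rw [Finset.sum_boole, Finset.filter_filter]
      by_cases hD : inDC F n σ D
      · have hD' : ¬ inDC F n (σ * s) D := hd D hD
        obtain ⟨h1, -, -⟩ := hf D (Or.inl hD)
        have : (Finset.univ.filter fun C : Cosets F n => inDC F n σ C ∧
            proj F n k D = proj F n k C ∧ D ≠ C) = (Finset.univ.filter fun C : Cosets F n =>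
              proj F n k C = proj F n k D ∧ inDC F n σ C).erase D := by
          ext C
          simp only [Finset.mem_filter, Finset.mem_univ, true_and, Finset.mem_erase]
          constructor
          · rintro ⟨ha, hb, hc⟩
            exact ⟨hc.symm, hb.symm, ha⟩
          · rintro ⟨ha, hb, hc⟩
            exact ⟨hc, hb.symm, ha.symm⟩
        rw [this, Finset.card_erase_of_mem (by simp [hD]), h1, if_neg hD', if_pos hD]
        push_cast [Nat.cast_sub hq]
        ring
      · by_cases hD' : inDC F n (σ * s) D
        · obtain ⟨h1, -, -⟩ := hf D (Or.inr hD')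
          have : (Finset.univ.filter fun C : Cosets F n => inDC F n σ C ∧
              proj F n k D = proj F n k C ∧ D ≠ C) = (Finset.univ.filter fun C : Cosets F n =>
                proj F n k C = proj F n k D ∧ inDC F n σ C) := by
            ext C
            simp only [Finset.mem_filter, Finset.mem_univ, true_and]
            constructor
            · rintro ⟨ha, hb, hc⟩
              exact ⟨hb.symm, ha⟩
            · rintro ⟨hb, hc⟩
              refine ⟨hc, hb.symm, ?_⟩
              rintro rfl
              exact hD hc
          rw [this, h1, if_neg hD, if_pos hD']
          ring
        · rw [if_neg hD, if_neg hD', Finset.filter_eq_empty_iff.2]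
          · simp
          · rintro C - ⟨ha, hb, hc⟩
            rcases (hf C (Or.inl ha)).2.2 D hb with h | h
            · exact hD h
            · exact hD' h

end QTsetlin
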